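/- Let k be a field of characteristic zero, S = k[x₁,…,xₙ], and T = S[X] = k[x₁,…,xₙ,X]. Let f ∈ S and ∂ ∈ k[y₁,…,yₙ] be such that ∂² ∘ f = 0, let m ≥ 2 be a natural number, and set g := f + X^m·(∂ ∘ f) ∈ T. Then, in the polynomial ring k[y₁,…,yₙ,α] acting on T (with α acting as ∂/∂X), the apolar ideal of g is Ann(g) = k[y,α]·Ann_{k[y]}(f) + k[y,α]·α·Ann_{k[y]}(∂ ∘ f) + (α^m − m!·∂), where the first two summands are the extensions of the ideals Ann_{k[y]}(f) and α·Ann_{k[y]}(∂ ∘ f). -/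

import Mathlib

/-- The apolarity action of `k[y₁,…,yₙ]` on `k[x₁,…,xₙ]`, in which `yᵢ` acts as
`∂/∂xᵢ`. -/
noncomputable def apolar {k : Type*} [CommSemiring k] {n : ℕ}
    (D f : MvPolynomial (Fin n) k) : MvPolynomial (Fin n) k :=
  ∑ a ∈ D.support, ∑ b ∈ f.support,
    MvPolynomial.monomial (b - a)
      (D.coeff a * f.coeff b * ∏ i : Fin n, ((b i).descFactorial (a i) : k))

/-!
Let `h = ∂ ∘ f` and write `e ∈ k[y,α]` as `∑ αⁱeᵢ` with `eᵢ ∈ k[y]`. Since `αⁱ` takes `Xᵐ` to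
`m(m-1)⋯(m-i+1) Xᵐ⁻ⁱ`, comparing coefficients of powers of `X` in `e ∘ g = 0` gives
`e₀ ∘ f + m!·(eₘ ∘ h) = 0` and `eᵢ ∘ h = 0` for `i < m`. Modulo `αᵐ - m!·∂`, the terms of `e` of
degree `0` and `m` in `α` combine to `e₀ + m!·∂eₘ`, which lies in `Ann(f)`. Those of degree
`0 < i < m` lie in `α·Ann(h)`, and so do, after the reduction to `αⁱ⁻ᵐ·m!·∂eᵢ`, those of degree
`i > m`, because `∂ ∘ h = 0`.
-/

open MvPolynomial
open scoped Nat

section Action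

variable {k : Type*} [CommSemiring k] {n : ℕ}

/-- The apolarity action as a bilinear map, prescribed on pairs of monomials; it carries the
linearity that is hidden by the double sum defining `apolar`. -/
noncomputable def apolarLinear (k : Type*) [CommSemiring k] (n : ℕ) :
    MvPolynomial (Fin n) k →ₗ[k] Module.End k (MvPolynomial (Fin n) k) :=
  (basisMonomials (Fin n) k).constr k fun a =>
    (basisMonomials (Fin n) k).constr k fun b =>
      monomial (b - a) (∏ i, ((b i).descFactorial (a i) : k))

theorem apolarLinear_monomial_monomial (a b : Fin n →₀ ℕ) (c d : k) :
    apolarLinear k n (monomial a c) (monomial b d) =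
      monomial (b - a) (c * d * ∏ i, ((b i).descFactorial (a i) : k)) := by
  have monomial_eq (s : Fin n →₀ ℕ) (r : k) : monomial s r = r • basisMonomials (Fin n) k s := by
    simp [smul_monomial]
  rw [monomial_eq a, monomial_eq b, map_smul, map_smul, LinearMap.smul_apply, apolarLinear,
    Module.Basis.constr_basis, Module.Basis.constr_basis, smul_monomial, smul_monomial,
    smul_eq_mul, smul_eq_mul, mul_left_comm, mul_assoc]

theorem apolarLinear_apply (p f : MvPolynomial (Fin n) k) :
    apolarLinear k n p f = apolar p f := by
  conv_lhs => rw [p.as_sum, f.as_sum]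
  simp only [map_sum, LinearMap.sum_apply, apolarLinear_monomial_monomial]
  rw [apolar, Finset.sum_comm]

theorem apolarLinear_one : apolarLinear k n 1 = 1 := by
  refine (basisMonomials (Fin n) k).ext fun b => ?_
  rw [coe_basisMonomials, ← C_1, C_apply, apolarLinear_monomial_monomial]
  simp only [Finsupp.coe_zero, Pi.zero_apply, Nat.descFactorial_zero, Nat.cast_one,
    Finset.prod_const_one, mul_one, tsub_zero, Module.End.one_apply]

theorem prod_descFactorial_add (a b e : Fin n →₀ ℕ) :
    ∏ i, ((e i).descFactorial ((a + b) i) : k) =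
      (∏ i, (((e - b) i).descFactorial (a i) : k)) * ∏ i, ((e i).descFactorial (b i) : k) := by
  rw [← Finset.prod_mul_distrib]
  refine Finset.prod_congr rfl fun i _ => ?_
  have h := Nat.descFactorial_mul_descFactorial (n := e i) (Nat.le_add_left (b i) (a i))
  rw [Nat.add_sub_cancel] at h
  rw [Finsupp.add_apply, Finsupp.tsub_apply, ← h, Nat.cast_mul]

theorem apolarLinear_mul (p q : MvPolynomial (Fin n) k) :
    apolarLinear k n (p * q) = apolarLinear k n p * apolarLinear k n q := by
  induction p using MvPolynomial.induction_on' with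
  | add p₁ p₂ h₁ h₂ => simp only [add_mul, map_add, h₁, h₂]
  | monomial a c =>
  induction q using MvPolynomial.induction_on' with
  | add q₁ q₂ h₁ h₂ => simp only [mul_add, map_add, h₁, h₂]
  | monomial b d =>
  refine LinearMap.ext fun f => ?_
  induction f using MvPolynomial.induction_on' with
  | add f₁ f₂ h₁ h₂ => simp only [map_add, h₁, h₂]
  | monomial e u =>
  rw [Module.End.mul_apply, monomial_mul]
  simp only [apolarLinear_monomial_monomial]
  rw [add_comm a b, tsub_add_eq_tsub_tsub, add_comm b a, prod_descFactorial_add]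
  congr 1
  ring

/-- The apolarity action as a representation of the polynomial ring `k[y₁,…,yₙ]` on
`k[x₁,…,xₙ]`. -/
noncomputable def apolarHom (k : Type*) [CommSemiring k] (n : ℕ) :
    MvPolynomial (Fin n) k →ₐ[k] Module.End k (MvPolynomial (Fin n) k) :=
  AlgHom.ofLinearMap (apolarLinear k n) apolarLinear_one apolarLinear_mul

theorem apolarHom_apply (p f : MvPolynomial (Fin n) k) : apolarHom k n p f = apolar p f :=
  apolarLinear_apply p f

theorem apolarHom_monomial_monomial (a b : Fin n →₀ ℕ) (c d : k) :
    apolarHom k n (monomial a c) (monomial b d) =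
      monomial (b - a) (c * d * ∏ i, ((b i).descFactorial (a i) : k)) :=
  apolarLinear_monomial_monomial a b c d

theorem apolarHom_mul_apply (p q f : MvPolynomial (Fin n) k) :
    apolarHom k n (p * q) f = apolarHom k n p (apolarHom k n q f) := by
  rw [map_mul, Module.End.mul_apply]

/-- The apolar ideal `Ann(f)` of a polynomial `f`. -/
def apolarIdeal (f : MvPolynomial (Fin n) k) : Ideal (MvPolynomial (Fin n) k) where
  carrier := {e | apolar e f = 0}
  zero_mem' := by simp [← apolarHom_apply]
  add_mem' {p q} hp hq := by
    simp only [Set.mem_ofPred_eq, ← apolarHom_apply] at hp hq ⊢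
    rw [map_add, LinearMap.add_apply, hp, hq, add_zero]
  smul_mem' p q hq := by
    simp only [Set.mem_ofPred_eq, ← apolarHom_apply] at hq ⊢
    rw [smul_eq_mul, apolarHom_mul_apply, hq, map_zero]

theorem mem_apolarIdeal {e f : MvPolynomial (Fin n) k} :
    e ∈ apolarIdeal f ↔ apolarHom k n e f = 0 := by
  rw [apolarHom_apply]
  rfl

theorem mem_apolarIdeal_apolar {e D f : MvPolynomial (Fin n) k} :
    e ∈ apolarIdeal (apolar D f) ↔ e * D ∈ apolarIdeal f := by
  rw [mem_apolarIdeal, mem_apolarIdeal, apolarHom_mul_apply, apolarHom_apply D f]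

end Action

section LastVariable

variable {k : Type*} [CommSemiring k] {n : ℕ}

/-- Polynomials in `n + 1` variables as polynomials in the last variable; the counterpart for
`Fin.last n` of `MvPolynomial.finSuccEquiv`, which singles out the variable `0`. -/
noncomputable def lastVariableEquiv (k : Type*) [CommSemiring k] (n : ℕ) :
    MvPolynomial (Fin (n + 1)) k ≃ₐ[k] Polynomial (MvPolynomial (Fin n) k) :=
  (renameEquiv k finSuccEquivLast).trans (optionEquivLeft k (Fin n))

theorem lastVariableEquiv_rename (p : MvPolynomial (Fin n) k) :
    lastVariableEquiv k n (rename Fin.castSucc p) = Polynomial.C p := by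
  induction p using MvPolynomial.induction_on with
  | C a => simp [lastVariableEquiv]
  | add p q hp hq => simp only [map_add, hp, hq]
  | mul_X p i hp => rw [map_mul, map_mul, hp, map_mul]; simp [lastVariableEquiv]

theorem lastVariableEquiv_X_pow_mul_rename (i : ℕ) (p : MvPolynomial (Fin n) k) :
    lastVariableEquiv k n (X (Fin.last n) ^ i * rename Fin.castSucc p) =
      Polynomial.monomial i p := by
  have h : lastVariableEquiv k n (X (Fin.last n)) = Polynomial.X := by simp [lastVariableEquiv]
  rw [map_mul, map_pow, h, lastVariableEquiv_rename, mul_comm, Polynomial.C_mul_X_pow_eq_monomial]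

/-- The coefficient of `Xⁱ` in a polynomial in `n + 1` variables, where `X` is the last
variable. -/
noncomputable def lastCoeff (i : ℕ) :
    MvPolynomial (Fin (n + 1)) k →ₗ[k] MvPolynomial (Fin n) k :=
  (Polynomial.lcoeff _ i).restrictScalars k ∘ₗ (lastVariableEquiv k n).toLinearMap

theorem lastCoeff_X_pow_mul_rename (i j : ℕ) (p : MvPolynomial (Fin n) k) :
    lastCoeff i (X (Fin.last n) ^ j * rename Fin.castSucc p) = if j = i then p else 0 := by
  simp [lastCoeff, lastVariableEquiv_X_pow_mul_rename, Polynomial.coeff_monomial]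

theorem lastCoeff_rename (i : ℕ) (p : MvPolynomial (Fin n) k) :
    lastCoeff i (rename Fin.castSucc p) = if 0 = i then p else 0 := by
  simpa using lastCoeff_X_pow_mul_rename i 0 p

theorem exists_sum_X_pow_mul_rename_lastCoeff (e : MvPolynomial (Fin (n + 1)) k) :
    ∃ s : Finset ℕ,
      e = ∑ i ∈ s, X (Fin.last n) ^ i * rename Fin.castSucc (lastCoeff i e) := by
  refine ⟨(lastVariableEquiv k n e).support, (lastVariableEquiv k n).injective ?_⟩
  simp only [map_sum, lastVariableEquiv_X_pow_mul_rename]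
  exact Polynomial.as_sum_support _

theorem mem_of_forall_X_pow_mul_rename_lastCoeff_mem {I : Ideal (MvPolynomial (Fin (n + 1)) k)}
    {e : MvPolynomial (Fin (n + 1)) k}
    (h : ∀ i, X (Fin.last n) ^ i * rename Fin.castSucc (lastCoeff i e) ∈ I) : e ∈ I := by
  obtain ⟨s, hs⟩ := exists_sum_X_pow_mul_rename_lastCoeff e
  rw [hs]
  exact I.sum_mem fun i _ => h i

theorem X_pow_mul_rename_monomial (i : ℕ) (a : Fin n →₀ ℕ) (c : k) :
    X (Fin.last n) ^ i * rename Fin.castSucc (monomial a c) =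
      monomial (Finsupp.single (Fin.last n) i + a.mapDomain Fin.castSucc) c := by
  rw [rename_monomial, X_pow_eq_monomial, monomial_mul, one_mul]

theorem mapDomain_castSucc_last (a : Fin n →₀ ℕ) :
    a.mapDomain Fin.castSucc (Fin.last n) = 0 :=
  Finsupp.mapDomain_of_notMem_range _ _ (by simp)

theorem mapDomain_castSucc_castSucc (a : Fin n →₀ ℕ) (i : Fin n) :
    a.mapDomain Fin.castSucc i.castSucc = a i :=
  Finsupp.mapDomain_apply (Fin.castSucc_injective n) _ _

theorem apolarHom_X_pow_mul_rename (i j : ℕ) (p q : MvPolynomial (Fin n) k) :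
    apolarHom k (n + 1) (X (Fin.last n) ^ i * rename Fin.castSucc p)
        (X (Fin.last n) ^ j * rename Fin.castSucc q) =
      X (Fin.last n) ^ (j - i) *
        rename Fin.castSucc (j.descFactorial i • apolarHom k n p q) := by
  induction p using MvPolynomial.induction_on' with
  | add p₁ p₂ h₁ h₂ => simp only [mul_add, map_add, LinearMap.add_apply, smul_add, h₁, h₂]
  | monomial a c =>
  induction q using MvPolynomial.induction_on' with
  | add q₁ q₂ h₁ h₂ => simp only [mul_add, map_add, smul_add, h₁, h₂]
  | monomial b d =>
  have exponent : Finsupp.single (Fin.last n) j + b.mapDomain Fin.castSucc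
      - (Finsupp.single (Fin.last n) i + a.mapDomain Fin.castSucc) =
      Finsupp.single (Fin.last n) (j - i) + (b - a).mapDomain Fin.castSucc := by
    ext t
    cases t using Fin.lastCases with
    | last => simp [mapDomain_castSucc_last]
    | cast t => simp [mapDomain_castSucc_castSucc]
  rw [apolarHom_monomial_monomial, smul_monomial]
  simp only [X_pow_mul_rename_monomial]
  rw [apolarHom_monomial_monomial, exponent, Fin.prod_univ_castSucc]
  simp only [Finsupp.add_apply, mapDomain_castSucc_last, mapDomain_castSucc_castSucc,
    Finsupp.single_eq_same, Finsupp.single_eq_of_ne (Fin.castSucc_ne_last _), zero_add, add_zero,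
    nsmul_eq_mul]
  congr 1
  ring

theorem lastCoeff_apolarHom_X_pow_mul_rename (e : MvPolynomial (Fin (n + 1)) k)
    (q : MvPolynomial (Fin n) k) (m j : ℕ) :
    lastCoeff j (apolarHom k (n + 1) e (X (Fin.last n) ^ m * rename Fin.castSucc q)) =
      if j ≤ m then m.descFactorial (m - j) • apolarHom k n (lastCoeff (m - j) e) q else 0 := by
  obtain ⟨P, rfl⟩ := (lastVariableEquiv k n).symm.surjective e
  induction P using Polynomial.induction_on' with
  | add P Q hP hQ =>
    simp only [map_add, LinearMap.add_apply, hP, hQ]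
    split_ifs <;> simp
  | monomial i p =>
    rw [← lastVariableEquiv_X_pow_mul_rename, AlgEquiv.symm_apply_apply,
      apolarHom_X_pow_mul_rename, lastCoeff_X_pow_mul_rename, lastCoeff_X_pow_mul_rename]
    rcases le_or_gt i m with hi | hi
    · by_cases hj : j = m - i
      · simp [hj, Nat.sub_sub_self hi]
      · have : ¬ (j ≤ m ∧ i = m - j) := by lia
        rw [if_neg (Ne.symm hj)]
        split_ifs <;> simp_all
    · have : i ≠ m - j := by lia
      simp [Nat.descFactorial_of_lt hi, this]

end LastVariable

theorem eq_zero_of_descFactorial_nsmul_eq_zero {σ k : Type*} [CommSemiring k] {m i : ℕ}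
    (hfac : (m ! : k) ∈ nonZeroDivisors k) (hi : i ≤ m) {p : MvPolynomial σ k}
    (hp : m.descFactorial i • p = 0) : p = 0 := by
  have h : m ! • p = 0 := by
    rw [← Nat.factorial_mul_descFactorial hi, mul_smul, hp, smul_zero]
  ext a
  refine (mem_nonZeroDivisors_iff.mp hfac).1 _ ?_
  rw [← nsmul_eq_mul, ← coeff_smul, h, coeff_zero]

section Deformation

variable {k : Type*} [CommRing k] {n m : ℕ} {f D : MvPolynomial (Fin n) k}

/-- The polynomial `g = f + Xᵐ·(∂ ∘ f)`. -/
noncomputable def deformation (f D : MvPolynomial (Fin n) k) (m : ℕ) :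
    MvPolynomial (Fin (n + 1)) k :=
  rename Fin.castSucc f + X (Fin.last n) ^ m * rename Fin.castSucc (apolar D f)

/-- The ideal `k[y,α]·Ann(f) + k[y,α]·α·Ann(∂ ∘ f) + (αᵐ - m!·∂)`, given by the union of the
three sets of generators. -/
noncomputable def deformationIdeal (f D : MvPolynomial (Fin n) k) (m : ℕ) :
    Ideal (MvPolynomial (Fin (n + 1)) k) :=
  Ideal.span
    (rename Fin.castSucc '' apolarIdeal f ∪
      (fun e => X (Fin.last n) * rename Fin.castSucc e) '' apolarIdeal (apolar D f) ∪
      {X (Fin.last n) ^ m - C (m ! : k) * rename Fin.castSucc D})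

theorem rename_mem_deformationIdeal {p : MvPolynomial (Fin n) k} (hp : p ∈ apolarIdeal f) :
    rename Fin.castSucc p ∈ deformationIdeal f D m :=
  Ideal.subset_span (.inl (.inl ⟨p, hp, rfl⟩))

theorem X_pow_mul_rename_mem_deformationIdeal {i : ℕ} (hi : i ≠ 0) {p : MvPolynomial (Fin n) k}
    (hp : p ∈ apolarIdeal (apolar D f)) :
    X (Fin.last n) ^ i * rename Fin.castSucc p ∈ deformationIdeal f D m := by
  rw [← Nat.succ_pred_eq_of_ne_zero hi, pow_succ, mul_assoc]
  exact Ideal.mul_mem_left _ _ (Ideal.subset_span (.inl (.inr ⟨p, hp, rfl⟩)))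

theorem X_pow_sub_mem_deformationIdeal :
    X (Fin.last n) ^ m - C (m ! : k) * rename Fin.castSucc D ∈ deformationIdeal f D m :=
  Ideal.subset_span (.inr rfl)

theorem X_pow_add_mul_rename_sub_mem_deformationIdeal (i : ℕ) (p : MvPolynomial (Fin n) k) :
    X (Fin.last n) ^ (i + m) * rename Fin.castSucc p -
      X (Fin.last n) ^ i * rename Fin.castSucc (C (m ! : k) * p * D) ∈
        deformationIdeal f D m := by
  convert Ideal.mul_mem_left _ (X (Fin.last n) ^ i * rename Fin.castSucc p)
    (X_pow_sub_mem_deformationIdeal (f := f) (D := D)) using 1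
  rw [map_mul, map_mul, rename_C]
  ring

theorem X_pow_mul_rename_mem_deformationIdeal_of_lt (hD : apolar (D * D) f = 0) {i : ℕ}
    (hi : m < i) (p : MvPolynomial (Fin n) k) :
    X (Fin.last n) ^ i * rename Fin.castSucc p ∈ deformationIdeal f D m := by
  have hDD : D ∈ apolarIdeal (apolar D f) := mem_apolarIdeal_apolar.mpr hD
  obtain ⟨j, rfl⟩ := Nat.exists_eq_add_of_lt hi
  rw [show m + j + 1 = j + 1 + m by ring]
  exact (Submodule.sub_mem_iff_left _ (X_pow_mul_rename_mem_deformationIdeal j.succ_ne_zero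
    (Ideal.mul_mem_left _ _ hDD))).mp (X_pow_add_mul_rename_sub_mem_deformationIdeal (j + 1) p)

theorem apolarHom_X_pow_mul_rename_deformation (i : ℕ) (p : MvPolynomial (Fin n) k) :
    apolarHom k (n + 1) (X (Fin.last n) ^ i * rename Fin.castSucc p) (deformation f D m) =
      rename Fin.castSucc (Nat.descFactorial 0 i • apolarHom k n p f) +
        X (Fin.last n) ^ (m - i) *
          rename Fin.castSucc (m.descFactorial i • apolarHom k n p (apolar D f)) := by
  have h := apolarHom_X_pow_mul_rename i 0 p f
  rw [pow_zero, one_mul, Nat.zero_sub, pow_zero, one_mul] at h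
  rw [deformation, map_add, h, apolarHom_X_pow_mul_rename]

theorem deformationIdeal_le_apolarIdeal (hD : apolar (D * D) f = 0) (hm : m ≠ 0) :
    deformationIdeal f D m ≤ apolarIdeal (deformation f D m) := by
  refine Ideal.span_le.mpr ?_
  rintro _ ((⟨p, hp, rfl⟩ | ⟨p, hp, rfl⟩) | rfl) <;>
    rw [SetLike.mem_coe, mem_apolarIdeal]
  · have hpD : apolarHom k n p (apolar D f) = 0 :=
      mem_apolarIdeal.mp (mem_apolarIdeal_apolar.mpr (Ideal.mul_mem_right _ _ hp))
    have h := apolarHom_X_pow_mul_rename_deformation (f := f) (D := D) (m := m) 0 p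
    simpa [mem_apolarIdeal.mp hp, hpD] using h
  · have h := apolarHom_X_pow_mul_rename_deformation (f := f) (D := D) (m := m) 1 p
    simpa [mem_apolarIdeal.mp hp] using h
  · have hDD : apolarHom k n D (apolar D f) = 0 := by
      rw [← apolarHom_apply D f, ← apolarHom_mul_apply, apolarHom_apply, hD]
    have hX := apolarHom_X_pow_mul_rename_deformation (f := f) (D := D) (m := m) m 1
    have hY := apolarHom_X_pow_mul_rename_deformation (f := f) (D := D) (m := m) 0 D
    rw [map_one, mul_one, Nat.descFactorial_of_lt (Nat.pos_of_ne_zero hm)] at hX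
    rw [pow_zero, one_mul] at hY
    rw [map_sub, LinearMap.sub_apply, C_mul', map_smul, LinearMap.smul_apply, hX, hY, hDD]
    simp [apolarHom_apply D f, Nat.descFactorial_self, smul_eq_C_mul]

theorem lastCoeff_apolarHom_deformation (e : MvPolynomial (Fin (n + 1)) k) (j : ℕ) :
    lastCoeff j (apolarHom k (n + 1) e (deformation f D m)) =
      (if j = 0 then apolarHom k n (lastCoeff 0 e) f else 0) +
        if j ≤ m then
          m.descFactorial (m - j) • apolarHom k n (lastCoeff (m - j) e) (apolar D f)
        else 0 := by
  have h := lastCoeff_apolarHom_X_pow_mul_rename e f 0 j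
  rw [pow_zero, one_mul] at h
  simp only [deformation, map_add, h, lastCoeff_apolarHom_X_pow_mul_rename, Nat.le_zero,
    Nat.zero_sub, Nat.descFactorial_zero, one_smul]

theorem lastCoeff_mem_apolarIdeal (hfac : (m ! : k) ∈ nonZeroDivisors k)
    {e : MvPolynomial (Fin (n + 1)) k} (he : e ∈ apolarIdeal (deformation f D m)) {i : ℕ}
    (hi : i < m) : lastCoeff i e ∈ apolarIdeal (apolar D f) := by
  have h := lastCoeff_apolarHom_deformation (f := f) (D := D) (m := m) e (m - i)
  rw [mem_apolarIdeal.mp he, map_zero, if_neg (Nat.sub_ne_zero_of_lt hi),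
    if_pos (Nat.sub_le m i), zero_add, Nat.sub_sub_self hi.le] at h
  exact mem_apolarIdeal.mpr (eq_zero_of_descFactorial_nsmul_eq_zero hfac hi.le h.symm)

theorem lastCoeff_zero_add_mem_apolarIdeal {e : MvPolynomial (Fin (n + 1)) k}
    (he : e ∈ apolarIdeal (deformation f D m)) :
    lastCoeff 0 e + C (m ! : k) * lastCoeff m e * D ∈ apolarIdeal f := by
  have h := lastCoeff_apolarHom_deformation (f := f) (D := D) (m := m) e 0
  rw [mem_apolarIdeal.mp he, map_zero, if_pos rfl, if_pos m.zero_le, Nat.sub_zero,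
    Nat.descFactorial_self] at h
  rw [mem_apolarIdeal, map_add, LinearMap.add_apply, apolarHom_mul_apply, apolarHom_apply D f,
    C_mul', map_smul, LinearMap.smul_apply, Nat.cast_smul_eq_nsmul, ← h]

theorem apolarIdeal_le_deformationIdeal (hD : apolar (D * D) f = 0) (hm : m ≠ 0)
    (hfac : (m ! : k) ∈ nonZeroDivisors k) :
    apolarIdeal (deformation f D m) ≤ deformationIdeal f D m := by
  intro e he
  set outer := rename Fin.castSucc (lastCoeff 0 e) +
    X (Fin.last n) ^ m * rename Fin.castSucc (lastCoeff m e) with outer_def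
  have outer_terms : outer ∈ deformationIdeal f D m := by
    have h := rename_mem_deformationIdeal (D := D) (m := m)
      (lastCoeff_zero_add_mem_apolarIdeal he)
    convert Ideal.add_mem _ h
      (X_pow_add_mul_rename_sub_mem_deformationIdeal 0 (lastCoeff m e)) using 1
    rw [outer_def, map_add, pow_zero, zero_add]
    ring
  have other_terms : e - outer ∈ deformationIdeal f D m := by
    refine mem_of_forall_X_pow_mul_rename_lastCoeff_mem fun i => ?_
    have coeff_outer : lastCoeff i outer =
        (if 0 = i then lastCoeff 0 e else 0) + if m = i then lastCoeff m e else 0 := by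
      rw [outer_def, map_add, lastCoeff_rename, lastCoeff_X_pow_mul_rename]
    rw [map_sub, coeff_outer]
    obtain rfl | hi₀ := eq_or_ne 0 i
    · simp [hm]
    obtain hi | rfl | hi := lt_trichotomy i m
    · simpa [hi₀, hi.ne'] using X_pow_mul_rename_mem_deformationIdeal hi₀.symm
        (lastCoeff_mem_apolarIdeal hfac he hi)
    · simp [hm.symm]
    · exact X_pow_mul_rename_mem_deformationIdeal_of_lt hD hi _
  simpa using Ideal.add_mem _ other_terms outer_terms

end Deformation

theorem deformations_stmt17_general {k : Type*} [CommRing k] {n m : ℕ}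
    {f D : MvPolynomial (Fin n) k} (hD : apolar (D * D) f = 0) (hm : m ≠ 0)
    (hfac : (m ! : k) ∈ nonZeroDivisors k) :
    apolarIdeal (deformation f D m) = deformationIdeal f D m :=
  (apolarIdeal_le_deformationIdeal hD hm hfac).antisymm (deformationIdeal_le_apolarIdeal hD hm)

/-- Let `k` be a field of characteristic zero, `S = k[x₁,…,xₙ]` and
`T = S[X] = k[x₁,…,xₙ,X]`. Let `f ∈ S` and `∂ ∈ k[y₁,…,yₙ]` with `∂² ∘ f = 0`, let
`m ≥ 2`, and set `g = f + X^m·(∂ ∘ f)`. Then in `k[y₁,…,yₙ,α]`, acting on `T` with `α`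
acting as `∂/∂X`, the apolar ideal of `g` is
`Ann(g) = k[y,α]·Ann_{k[y]}(f) + k[y,α]·α·Ann_{k[y]}(∂ ∘ f) + (α^m − m!·∂)`.

Here `k[x₁,…,xₙ,X] = k[x₁,…,xₙ₊₁]` with `X = xₙ₊₁` and `k[y₁,…,yₙ,α] = k[y₁,…,yₙ₊₁]`
with `α = yₙ₊₁`, the inclusion `k[y₁,…,yₙ] → k[y₁,…,yₙ,α]` being `rename Fin.castSucc`. -/
theorem deformations_stmt17 {k : Type*} [Field k] [CharZero k] {n : ℕ}
    (f D : MvPolynomial (Fin n) k)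
    (hD : apolar (D * D) f = 0)
    (m : ℕ) (hm : 2 ≤ m)
    (g : MvPolynomial (Fin (n + 1)) k)
    (hg : g = MvPolynomial.rename Fin.castSucc f +
      (MvPolynomial.X (Fin.last n)) ^ m *
        MvPolynomial.rename Fin.castSucc (apolar D f)) :
    {e : MvPolynomial (Fin (n + 1)) k | apolar e g = 0} =
      ↑(Ideal.span
        ((MvPolynomial.rename (Fin.castSucc : Fin n → Fin (n + 1)) ''
            {e : MvPolynomial (Fin n) k | apolar e f = 0}) ∪
         ((fun e : MvPolynomial (Fin n) k =>
            MvPolynomial.X (Fin.last n) * MvPolynomial.rename Fin.castSucc e) ''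
            {e : MvPolynomial (Fin n) k | apolar e (apolar D f) = 0}) ∪
         {(MvPolynomial.X (Fin.last n)) ^ m -
            MvPolynomial.C ((m.factorial : k)) * MvPolynomial.rename Fin.castSucc D})) := by
  subst hg
  have hfac : (m.factorial : k) ∈ nonZeroDivisors k :=
    mem_nonZeroDivisors_of_ne_zero (Nat.cast_ne_zero.mpr m.factorial_ne_zero)
  exact congrArg SetLike.coe (deformations_stmt17_general hD (by lia) hfac)
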